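/- Let G = (V,E) be a finite simple graph in which every node has degree exactly 3, with edge weights λ: E → [0,1] and node weights μ: V → (0,1]. Construct G' = (V',E') exactly as in the zero-field case: for each node i with neighbors n(i,1), n(i,2), n(i,3), A_i = {d_i, v_{i,n(i,1)}, v_{i,n(i,2)}, v_{i,n(i,3)}}, E_i = all 2-element subsets of A_i, V' = ∪_i A_i, and E' = {{v_{ij},v_{ji}} : {i,j} ∈ E} ∪ (∪_i E_i). For each i, let λ2(i) ≥ 0 satisfy the cubic equation μ(i)²(1+λ2(i))³ = 1 + 3λ2(i) + 3λ2(i)², and set λ1(i) = λ2(i)²/(1+λ2(i)) and α(i) = μ(i)(1+λ2(i)). Define edge weights λ' on G' by λ'({v_{ij},v_{ik}}) = λ1(i) for j ≠ k, λ'({d_i,v_{ij}}) = λ2(i), and λ'({v_{ij},v_{ji}}) = λ({i,j})·α(i)·α(j). Let φ({i,j}) = {v_{ij},v_{ji}}. Then the pushforward of the matching distribution π_mat on G' (with weights λ') under the map x' ↦ x'∘φ ∈ {0,1}^E equals the subgraphs-world distribution π_subs on G with parameters λ and μ. -/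

import Mathlib

/-- The degree of the vertex `v` under the configuration `x`. -/
def degU9 {W : Type*} [DecidableEq W] (x : Finset (Sym2 W)) (v : W) : ℕ :=
  (x.filter (fun e => v ∈ e)).card

/-- The subgraphs-world weight of a configuration `x`. -/
def wSubs9 {V : Type*} [Fintype V] [DecidableEq V]
    (lam : Sym2 V → ℝ) (mu : V → ℝ) (x : Finset (Sym2 V)) : ℝ :=
  (∏ e ∈ x, lam e) *
    ∏ v ∈ Finset.univ.filter (fun v => Odd (degU9 x v)), mu v

/-- The matching weight of a configuration `x`: the product of its edge
weights if no vertex is incident to two or more edges of `x`, else `0`. -/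
def wMat9 {W : Type*} [Fintype W] [DecidableEq W]
    (lam : Sym2 W → ℝ) (x : Finset (Sym2 W)) : ℝ :=
  if ∀ v : W, degU9 x v ≤ 1 then ∏ e ∈ x, lam e else 0

/-- The edge correspondence `φ({i,j}) = {v_{ij}, v_{ji}}`, where the new
vertex `v_{ij}` is modeled as `Sum.inr (i,j) : V ⊕ V × V`. -/
def phi9 {V : Type*} : Sym2 V → Sym2 (V ⊕ V × V) :=
  Sym2.lift ⟨fun a b => s(Sum.inr (a, b), Sum.inr (b, a)),
    fun _ _ => Sym2.eq_swap⟩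

/-- The gadget vertices for the original node `i`:
`A_i = {d_i, v_{i,n(i,1)}, v_{i,n(i,2)}, v_{i,n(i,3)}}`, with `d_i`
modeled as `Sum.inl i`. -/
def gadgetVerts9 {V : Type*} [Fintype V] [DecidableEq V]
    (E : Finset (Sym2 V)) (i : V) : Finset (V ⊕ V × V) :=
  insert (Sum.inl i)
    ((Finset.univ.filter (fun j => s(i, j) ∈ E)).image (fun j => Sum.inr (i, j)))

/-- The gadget edges `E_i`: all 2-element subsets of `A_i`. -/
def gadgetEdges9 {V : Type*} [Fintype V] [DecidableEq V]
    (E : Finset (Sym2 V)) (i : V) : Finset (Sym2 (V ⊕ V × V)) :=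
  ((gadgetVerts9 E i ×ˢ gadgetVerts9 E i).filter (fun p => p.1 ≠ p.2)).image
    (fun p => s(p.1, p.2))

section Gadget

open Finset

/-- Whether the `e`-th edge of the four-vertex gadget is incident to its `k`-th outer vertex:
`Sum.inl m` joins the centre to outer vertex `m`, and `Sum.inr m` joins the two outer vertices
other than `m`. -/
def gadgetInc (k : Fin 3) (e : Fin 3 ⊕ Fin 3) : Bool :=
  Sum.elim (fun m => decide (m = k)) (fun m => decide (m ≠ k)) e

/-- `Y` is a matching of the gadget which avoids the outer vertices in `S`. -/
def GadgetMatching (S : Finset (Fin 3)) (Y : Finset (Fin 3 ⊕ Fin 3)) : Prop :=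
  (Y.filter (fun e => e.isLeft = true)).card ≤ 1 ∧
    ∀ k, (if k ∈ S then 1 else 0) + (Y.filter (fun e => gadgetInc k e = true)).card ≤ 1

instance (S : Finset (Fin 3)) (Y : Finset (Fin 3 ⊕ Fin 3)) : Decidable (GadgetMatching S Y) :=
  inferInstanceAs (Decidable (_ ∧ _))

/-- The numbers of central and of outer edges of the gadget matchings which avoid `d` outer
vertices. -/
def gadgetTypes : ℕ → Multiset (ℕ × ℕ)
  | 0 => {(0, 0), (1, 0), (1, 0), (1, 0), (0, 1), (0, 1), (0, 1), (1, 1), (1, 1), (1, 1)}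
  | 1 => {(0, 0), (1, 0), (1, 0), (0, 1)}
  | 2 => {(0, 0), (1, 0)}
  | _ => {(0, 0)}

theorem gadgetMatching_types (S : Finset (Fin 3)) :
    (univ.filter (GadgetMatching S)).val.map
      (fun Y => ((Y.filter (fun e => e.isLeft = true)).card,
        (Y.filter (fun e => ¬ e.isLeft = true)).card)) = gadgetTypes S.card := by
  revert S
  decide +kernel

theorem sum_gadgetMatching (S : Finset (Fin 3)) (a b : ℝ) :
    ∑ Y : Finset (Fin 3 ⊕ Fin 3),
      (if GadgetMatching S Y then ∏ e ∈ Y, Sum.elim (fun _ => a) (fun _ => b) e else 0) =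
    ((gadgetTypes S.card).map (fun p => a ^ p.1 * b ^ p.2)).sum := by
  rw [← sum_filter, ← gadgetMatching_types, Multiset.map_map, Finset.sum]
  congr 1
  refine Multiset.map_congr rfl fun Y _ => ?_
  rw [← prod_filter_mul_prod_filter_not Y (fun e => e.isLeft = true)]
  simp only [Function.comp]
  congr 1
  · refine prod_eq_pow_card fun e he => ?_
    rcases e with e | e <;> simp_all
  · refine prod_eq_pow_card fun e he => ?_
    rcases e with e | e <;> simp_all

theorem pow_mul_sum_gadgetTypes {m a b α : ℝ} (ha : 0 ≤ a)
    (hm : m ^ 2 * (1 + a) ^ 3 = 1 + 3 * a + 3 * a ^ 2) (hb : b = a ^ 2 / (1 + a))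
    (hα : α = m * (1 + a)) {d : ℕ} (hd : d ≤ 3) :
    α ^ d * ((gadgetTypes d).map (fun p => a ^ p.1 * b ^ p.2)).sum =
      (1 + 3 * a + 3 * a ^ 2) * (if Odd d then m else 1) := by
  have h1 : (1 + a) ≠ 0 := by positivity
  have hb' : b * (1 + a) = a ^ 2 := by rw [hb]; field_simp
  have o3 : Odd 3 := by decide
  have o2 : ¬ Odd 2 := by decide
  subst hα
  interval_cases d
  · simp [gadgetTypes]
    linear_combination 3 * hb'
  · simp [gadgetTypes]
    linear_combination m * hb'
  · simp [gadgetTypes, o2]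
    linear_combination hm
  · simp [gadgetTypes, o3]
    linear_combination m * hm

variable {V : Type*}

/-- The original node whose gadget contains a given vertex. -/
def owner : V ⊕ V × V → V := Sum.elim id Prod.fst

theorem phi9_injective : Function.Injective (phi9 : Sym2 V → Sym2 (V ⊕ V × V)) := by
  intro e f
  induction e with | _ a b
  induction f with | _ c d
  simp only [phi9, Sym2.lift_mk, Sym2.eq_iff, Sum.inr.injEq, Prod.mk.injEq]
  tauto

theorem inr_mem_phi9 (i j : V) (e : Sym2 V) :
    (Sum.inr (i, j) : V ⊕ V × V) ∈ phi9 e ↔ e = s(i, j) := by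
  induction e with | _ a b
  simp only [phi9, Sym2.lift_mk, Sym2.mem_iff, Sym2.eq_iff, Sum.inr.injEq, Prod.mk.injEq]
  grind

theorem inl_notMem_phi9 (i : V) (e : Sym2 V) : (Sum.inl i : V ⊕ V × V) ∉ phi9 e := by
  induction e with | _ a b
  simp [phi9]

/-- The edges of the gadget at `i`, for an enumeration `n` of the neighbours of `i`. -/
def gadgetEdge (i : V) (n : Fin 3 → V) : Fin 3 ⊕ Fin 3 → Sym2 (V ⊕ V × V) :=
  Sum.elim (fun k => s(Sum.inl i, Sum.inr (i, n k)))
    (fun k => s(Sum.inr (i, n (k + 1)), Sum.inr (i, n (k + 2))))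

theorem inl_mem_gadgetEdge (i : V) (n : Fin 3 → V) (e : Fin 3 ⊕ Fin 3) :
    Sum.inl i ∈ gadgetEdge i n e ↔ e.isLeft = true := by
  rcases e with k | k <;> simp [gadgetEdge]

theorem inr_mem_gadgetEdge (i : V) {n : Fin 3 → V} (hn : Function.Injective n) (k : Fin 3)
    (e : Fin 3 ⊕ Fin 3) :
    Sum.inr (i, n k) ∈ gadgetEdge i n e ↔ gadgetInc k e = true := by
  rcases e with m | m <;> simp [gadgetEdge, gadgetInc, hn.eq_iff]
  · exact eq_comm
  · revert k m; decide

theorem inr_notMem_gadgetEdge (i : V) {n : Fin 3 → V} {j : V} (hj : ∀ k, n k ≠ j)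
    (e : Fin 3 ⊕ Fin 3) : Sum.inr (i, j) ∉ gadgetEdge i n e := by
  rcases e with m | m <;> simp [gadgetEdge, fun k => (hj k).symm]

theorem gadgetEdge_injective (i : V) {n : Fin 3 → V} (hn : Function.Injective n) :
    Function.Injective (gadgetEdge i n) := by
  intro e f h
  have hl : e.isLeft = true ↔ f.isLeft = true := by
    rw [← inl_mem_gadgetEdge i n, h, inl_mem_gadgetEdge]
  have hk : ∀ k, gadgetInc k e = true ↔ gadgetInc k f = true := fun k => by
    rw [← inr_mem_gadgetEdge i hn, h, inr_mem_gadgetEdge i hn]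
  clear h
  revert e f
  decide

theorem degU9_union_of_disjoint {W : Type*} [DecidableEq W] {x y : Finset (Sym2 W)}
    (h : Disjoint x y) (v : W) : degU9 (x ∪ y) v = degU9 x v + degU9 y v := by
  rw [degU9, filter_union, card_union_of_disjoint (disjoint_filter_filter h)]
  rfl

variable [DecidableEq V]

theorem degU9_image_phi9_inr (x : Finset (Sym2 V)) (i j : V) :
    degU9 (x.image phi9) (Sum.inr (i, j)) = if s(i, j) ∈ x then 1 else 0 := by
  rw [degU9, filter_image, card_image_of_injective _ phi9_injective]
  simp only [inr_mem_phi9, filter_eq']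
  split_ifs <;> simp

theorem degU9_image_phi9_inl (x : Finset (Sym2 V)) (i : V) :
    degU9 (x.image phi9) (Sum.inl i) = 0 := by
  rw [degU9, filter_image]
  simp [inl_notMem_phi9]

variable [Fintype V]

theorem degU9_eq_card_neighbors (x : Finset (Sym2 V)) (i : V) :
    degU9 x i = (univ.filter (fun j => s(i, j) ∈ x)).card := by
  have h : x.filter (fun e => i ∈ e) = (univ.filter (fun j => s(i, j) ∈ x)).image (s(i, ·)) := by
    ext e
    simp only [mem_filter, mem_image, mem_univ, true_and]
    constructor
    · rintro ⟨he, j, rfl⟩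
      exact ⟨j, he, rfl⟩
    · rintro ⟨j, hj, rfl⟩
      exact ⟨hj, Sym2.mem_mk_left _ _⟩
  rw [degU9, h, card_image_of_injective]
  exact fun a b hab => Sym2.congr_right.1 hab

theorem owner_of_mem_gadgetEdges9 {E : Finset (Sym2 V)} {i : V} {e : Sym2 (V ⊕ V × V)}
    (he : e ∈ gadgetEdges9 E i) {v : V ⊕ V × V} (hv : v ∈ e) : owner v = i := by
  simp only [gadgetEdges9, gadgetVerts9, mem_image, mem_filter, mem_product, mem_insert,
    mem_univ, true_and] at he
  obtain ⟨⟨p, q⟩, ⟨⟨hp, hq⟩, -⟩, rfl⟩ := he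
  have key : ∀ w : V ⊕ V × V, (w = Sum.inl i ∨ ∃ j, s(i, j) ∈ E ∧ Sum.inr (i, j) = w) →
      owner w = i := by
    rintro w (rfl | ⟨j, -, rfl⟩) <;> rfl
  rcases Sym2.mem_iff.1 hv with rfl | rfl
  · exact key _ hp
  · exact key _ hq

theorem phi9_notMem_gadgetEdges9 {E : Finset (Sym2 V)} {e : Sym2 V} (he : ¬ e.IsDiag) (i : V) :
    phi9 e ∉ gadgetEdges9 E i := by
  induction e with | _ a b
  intro h
  have ha := owner_of_mem_gadgetEdges9 h ((inr_mem_phi9 a b _).2 rfl)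
  have hb := owner_of_mem_gadgetEdges9 h ((inr_mem_phi9 b a _).2 Sym2.eq_swap)
  exact he (Sym2.mk_isDiag_iff.2 (ha.trans hb.symm))

theorem eq_of_mem_gadgetEdges9 {E : Finset (Sym2 V)} {i j : V} {e : Sym2 (V ⊕ V × V)}
    (hi : e ∈ gadgetEdges9 E i) (hj : e ∈ gadgetEdges9 E j) : i = j := by
  induction e with | _ a b
  have ha := Sym2.mem_mk_left a b
  exact (owner_of_mem_gadgetEdges9 hi ha).symm.trans (owner_of_mem_gadgetEdges9 hj ha)

theorem image_gadgetEdge {E : Finset (Sym2 V)} {i : V} {n : Fin 3 → V}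
    (hn : Function.Injective n) (hrange : ∀ j, s(i, j) ∈ E ↔ ∃ k, n k = j) :
    univ.image (gadgetEdge i n) = gadgetEdges9 E i := by
  ext e
  simp only [gadgetEdges9, gadgetVerts9, mem_image, mem_filter, mem_product, mem_insert,
    mem_univ, true_and, hrange]
  constructor
  · rintro ⟨k | k, rfl⟩
    · exact ⟨(Sum.inl i, Sum.inr (i, n k)), by simp, rfl⟩
    · refine ⟨(Sum.inr (i, n (k + 1)), Sum.inr (i, n (k + 2))), ?_, rfl⟩
      simp [hn.eq_iff]
  · have key : ∀ k m : Fin 3, k ≠ m →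
        ∃ l, (l + 1 = k ∧ l + 2 = m) ∨ (l + 1 = m ∧ l + 2 = k) := by decide
    rintro ⟨⟨p, q⟩, ⟨⟨rfl | ⟨_, ⟨k, rfl⟩, rfl⟩, rfl | ⟨_, ⟨m, rfl⟩, rfl⟩⟩, hpq⟩, rfl⟩
    · simp at hpq
    · exact ⟨Sum.inl m, rfl⟩
    · exact ⟨Sum.inl k, Sym2.eq_swap⟩
    · obtain ⟨l, ⟨rfl, rfl⟩ | ⟨rfl, rfl⟩⟩ := key k m (by rintro rfl; simp at hpq)
      · exact ⟨Sum.inr l, rfl⟩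
      · exact ⟨Sum.inr l, Sym2.eq_swap⟩

theorem exists_neighbor_enumeration {E : Finset (Sym2 V)} {i : V} (h : degU9 E i = 3) :
    ∃ n : Fin 3 → V, Function.Injective n ∧ ∀ j, s(i, j) ∈ E ↔ ∃ k, n k = j := by
  rw [degU9_eq_card_neighbors] at h
  let f := (Finset.equivFinOfCardEq h).symm
  refine ⟨fun k => (f k : V), Subtype.val_injective.comp f.injective, fun j => ?_⟩
  constructor
  · intro hj
    exact ⟨f.symm ⟨j, by simpa using hj⟩, by simp⟩
  · rintro ⟨k, rfl⟩
    exact (mem_filter.1 (f k).2).2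

theorem disjoint_image_phi9 {E x : Finset (Sym2 V)} (hx : ∀ e ∈ x, ¬ e.IsDiag) {i : V}
    {y : Finset (Sym2 (V ⊕ V × V))} (hy : y ⊆ gadgetEdges9 E i) :
    Disjoint (x.image phi9) y := by
  rw [disjoint_left]
  intro e he hey
  obtain ⟨f, hf, rfl⟩ := mem_image.1 he
  exact phi9_notMem_gadgetEdges9 (hx f hf) i (hy hey)

/-- The weight of a set `y` of edges of the gadget at `i` when the edges of `x` are used
outside the gadgets. -/
noncomputable def gadgetWeight (lam' : Sym2 (V ⊕ V × V) → ℝ) (x : Finset (Sym2 V)) (i : V)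
    (y : Finset (Sym2 (V ⊕ V × V))) : ℝ :=
  if ∀ v, owner v = i → degU9 (x.image phi9 ∪ y) v ≤ 1 then ∏ e ∈ y, lam' e else 0

theorem forall_degU9_le_one_iff_gadgetMatching {E x : Finset (Sym2 V)}
    (hx : ∀ e ∈ x, ¬ e.IsDiag) (hxE : x ⊆ E) {i : V} {n : Fin 3 → V}
    (hn : Function.Injective n) (hrange : ∀ j, s(i, j) ∈ E ↔ ∃ k, n k = j)
    (Y : Finset (Fin 3 ⊕ Fin 3)) :
    (∀ v, owner v = i → degU9 (x.image phi9 ∪ Y.image (gadgetEdge i n)) v ≤ 1) ↔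
      GadgetMatching (univ.filter (fun k => s(i, n k) ∈ x)) Y := by
  have hdisj : Disjoint (x.image phi9) (Y.image (gadgetEdge i n)) :=
    disjoint_image_phi9 hx
      ((image_subset_image (subset_univ Y)).trans (image_gadgetEdge hn hrange).subset)
  have hcard : ∀ v, degU9 (Y.image (gadgetEdge i n)) v =
      (Y.filter (fun e => v ∈ gadgetEdge i n e)).card := fun v => by
    rw [degU9, filter_image, card_image_of_injective _ (gadgetEdge_injective i hn)]
  simp only [degU9_union_of_disjoint hdisj, hcard, GadgetMatching, mem_filter, mem_univ, true_and]
  constructor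
  · intro h
    constructor
    · simpa [degU9_image_phi9_inl, inl_mem_gadgetEdge] using h (Sum.inl i) rfl
    · intro k
      simpa only [degU9_image_phi9_inr, inr_mem_gadgetEdge i hn] using h (Sum.inr (i, n k)) rfl
  · rintro ⟨h0, h⟩ (j | ⟨j, l⟩) (rfl : j = i)
    · simpa [degU9_image_phi9_inl, inl_mem_gadgetEdge] using h0
    · by_cases hl : ∃ k, n k = l
      · obtain ⟨k, rfl⟩ := hl
        simpa only [degU9_image_phi9_inr, inr_mem_gadgetEdge j hn] using h k
      · have hlx : s(j, l) ∉ x := fun hm => hl ((hrange l).1 (hxE hm))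
        push Not at hl
        simp [degU9_image_phi9_inr, hlx, inr_notMem_gadgetEdge j hl]

theorem sum_gadgetWeight {E x : Finset (Sym2 V)} (hx : ∀ e ∈ x, ¬ e.IsDiag) (hxE : x ⊆ E)
    {i : V} (hi : degU9 E i = 3) {lam' : Sym2 (V ⊕ V × V) → ℝ} {a b : ℝ}
    (ha : ∀ j, s(i, j) ∈ E → lam' s(Sum.inl i, Sum.inr (i, j)) = a)
    (hb : ∀ j k, s(i, j) ∈ E → s(i, k) ∈ E → j ≠ k →
      lam' s(Sum.inr (i, j), Sum.inr (i, k)) = b) :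
    ∑ y ∈ (gadgetEdges9 E i).powerset, gadgetWeight lam' x i y =
      ((gadgetTypes (degU9 x i)).map (fun p => a ^ p.1 * b ^ p.2)).sum := by
  obtain ⟨n, hn, hrange⟩ := exists_neighbor_enumeration hi
  have hinj := gadgetEdge_injective i hn
  have hS : (univ.filter (fun k => s(i, n k) ∈ x)).card = degU9 x i := by
    rw [degU9_eq_card_neighbors, ← card_image_of_injective _ hn]
    congr 1
    ext j
    simp only [mem_image, mem_filter, mem_univ, true_and]
    constructor
    · rintro ⟨k, hk, rfl⟩
      exact hk
    · intro hj
      obtain ⟨k, rfl⟩ := (hrange j).1 (hxE hj)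
      exact ⟨k, hj, rfl⟩
  have hw : ∀ e, lam' (gadgetEdge i n e) = Sum.elim (fun _ => a) (fun _ => b) e := by
    rintro (k | k)
    · exact ha _ ((hrange _).2 ⟨k, rfl⟩)
    · refine hb _ _ ((hrange _).2 ⟨_, rfl⟩) ((hrange _).2 ⟨_, rfl⟩) (hn.ne ?_)
      revert k; decide
  rw [← hS, ← sum_gadgetMatching, ← image_gadgetEdge hn hrange, powerset_image,
    sum_image (fun s _ t _ h => image_injective hinj h), powerset_univ]
  refine sum_congr rfl fun Y _ => ?_
  rw [gadgetWeight, prod_image (fun s _ t _ h => hinj h)]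
  simp only [forall_degU9_le_one_iff_gadgetMatching hx hxE hn hrange, hw]

theorem prod_lam'_image_phi9 {E x : Finset (Sym2 V)} (hE : ∀ e ∈ E, ¬ e.IsDiag) (hxE : x ⊆ E)
    {lam : Sym2 V → ℝ} {al : V → ℝ} {lam' : Sym2 (V ⊕ V × V) → ℝ}
    (h : ∀ i j : V, s(i, j) ∈ E →
      lam' s(Sum.inr (i, j), Sum.inr (j, i)) = lam s(i, j) * al i * al j) :
    ∏ e ∈ x.image phi9, lam' e = (∏ e ∈ x, lam e) * ∏ i, al i ^ degU9 x i := by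
  have key : ∀ e ∈ x, lam' (phi9 e) = lam e * ∏ i, if i ∈ e then al i else 1 := by
    intro e he
    induction e with | _ a b
    have hab : a ≠ b := fun h => hE _ (hxE he) (Sym2.mk_isDiag_iff.2 h)
    have hf : univ.filter (fun i => i ∈ s(a, b)) = {a, b} := by ext; simp
    rw [← prod_filter, hf, prod_pair hab, ← mul_assoc]
    exact h a b (hxE he)
  rw [prod_image (fun s _ t _ h => phi9_injective h), prod_congr rfl key, prod_mul_distrib,
    prod_comm]
  congr 1
  refine prod_congr rfl fun i _ => ?_
  rw [← prod_filter, prod_const, degU9]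

theorem wMat9_union_biUnion {E x : Finset (Sym2 V)} (hx : ∀ e ∈ x, ¬ e.IsDiag)
    (lam' : Sym2 (V ⊕ V × V) → ℝ) {p : V → Finset (Sym2 (V ⊕ V × V))}
    (hp : ∀ i, p i ⊆ gadgetEdges9 E i) :
    wMat9 lam' (x.image phi9 ∪ univ.biUnion p) =
      (∏ e ∈ x.image phi9, lam' e) * ∏ i, gadgetWeight lam' x i (p i) := by
  have hpd : (↑(univ : Finset V) : Set V).PairwiseDisjoint p := by
    intro i _ j _ hij
    refine disjoint_left.2 fun e hei hej => hij ?_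
    exact eq_of_mem_gadgetEdges9 (hp i hei) (hp j hej)
  have hd : Disjoint (x.image phi9) (univ.biUnion p) :=
    (disjoint_biUnion_right _ _ _).2 fun i _ => disjoint_image_phi9 hx (hp i)
  have hdeg : ∀ v, degU9 (x.image phi9 ∪ univ.biUnion p) v =
      degU9 (x.image phi9 ∪ p (owner v)) v := fun v => by
    rw [degU9, degU9]
    congr 1
    ext e
    simp only [mem_filter, mem_union, mem_biUnion, mem_univ, true_and]
    refine and_congr_left fun hv => or_congr_right ⟨?_, fun h => ⟨_, h⟩⟩
    rintro ⟨i, hi⟩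
    rwa [owner_of_mem_gadgetEdges9 (hp i hi) hv]
  have hiff : (∀ v, degU9 (x.image phi9 ∪ univ.biUnion p) v ≤ 1) ↔
      ∀ i ∈ (univ : Finset V), ∀ v, owner v = i → degU9 (x.image phi9 ∪ p i) v ≤ 1 := by
    simp only [hdeg, mem_univ, true_imp_iff]
    exact ⟨fun h i v hv => hv ▸ h v, fun h v => h _ v rfl⟩
  simp only [wMat9, gadgetWeight]
  by_cases h : ∀ v, degU9 (x.image phi9 ∪ univ.biUnion p) v ≤ 1
  · rw [if_pos h, prod_union hd, prod_biUnion hpd]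
    congr 1
    exact prod_congr rfl fun i hi => (if_pos (hiff.1 h i hi)).symm
  · rw [if_neg h]
    rw [hiff] at h
    push Not at h
    obtain ⟨i, hi, v, hv, hlt⟩ := h
    rw [prod_eq_zero hi (if_neg fun h => (h v hv).not_gt hlt), mul_zero]

theorem sum_fiber_eq_sum_piFinset {E x : Finset (Sym2 V)} (hE : ∀ e ∈ E, ¬ e.IsDiag)
    (hxE : x ⊆ E) (w : Finset (Sym2 (V ⊕ V × V)) → ℝ) :
    ∑ x' ∈ (E.image phi9 ∪ univ.biUnion (gadgetEdges9 E)).powerset.filter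
        (fun x' => E.filter (fun e => phi9 e ∈ x') = x), w x' =
      ∑ p ∈ Fintype.piFinset (fun i => (gadgetEdges9 E i).powerset),
        w (x.image phi9 ∪ univ.biUnion p) := by
  have hleft : ∀ x' ∈ (E.image phi9 ∪ univ.biUnion (gadgetEdges9 E)).powerset.filter
        (fun x' => E.filter (fun e => phi9 e ∈ x') = x),
      x.image phi9 ∪ univ.biUnion (fun i => x' ∩ gadgetEdges9 E i) = x' := by
    intro x' hx'
    obtain ⟨hsub, rfl⟩ := mem_filter.1 hx'
    rw [mem_powerset] at hsub
    ext e
    simp only [mem_union, mem_image, mem_filter, mem_biUnion, mem_univ, true_and, mem_inter]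
    constructor
    · rintro (⟨f, ⟨-, hf⟩, rfl⟩ | ⟨i, hi, -⟩) <;> assumption
    · intro he
      rcases mem_union.1 (hsub he) with h | h
      · obtain ⟨f, hf, rfl⟩ := mem_image.1 h
        exact Or.inl ⟨f, ⟨hf, he⟩, rfl⟩
      · obtain ⟨i, -, hi⟩ := mem_biUnion.1 h
        exact Or.inr ⟨i, he, hi⟩
  refine sum_nbij' (fun x' i => x' ∩ gadgetEdges9 E i)
    (fun p => x.image phi9 ∪ univ.biUnion p) ?_ ?_ hleft ?_ ?_
  · intro x' _
    simp [Fintype.mem_piFinset]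
  · intro p hp
    simp only [Fintype.mem_piFinset, mem_powerset] at hp
    simp only [mem_filter, mem_powerset]
    refine ⟨union_subset_union (image_subset_image hxE) (biUnion_mono fun i _ => hp i), ?_⟩
    ext e
    simp only [mem_filter, mem_union, mem_biUnion, mem_univ, true_and,
      phi9_injective.mem_finset_image]
    constructor
    · rintro ⟨he, h | ⟨i, hi⟩⟩
      · exact h
      · exact absurd (hp i hi) (phi9_notMem_gadgetEdges9 (hE e he) i)
    · exact fun h => ⟨hxE h, Or.inl h⟩
  · intro p hp
    simp only [Fintype.mem_piFinset, mem_powerset] at hp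
    funext i
    ext e
    simp only [mem_inter, mem_union, mem_biUnion, mem_univ, true_and]
    constructor
    · rintro ⟨h | ⟨j, hj⟩, hi⟩
      · obtain ⟨f, hf, rfl⟩ := mem_image.1 h
        exact absurd hi (phi9_notMem_gadgetEdges9 (hE f (hxE hf)) i)
      · rwa [eq_of_mem_gadgetEdges9 hi (hp j hj)]
    · exact fun h => ⟨Or.inr ⟨i, h⟩, hp i h⟩
  · intro x' hx'
    rw [hleft x' hx']

end Gadget

/-- Reduction of the subgraphs world with positive field on a
cubic graph to weighted matchings.  With the same gadget graph `G'` as in the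
zero-field case, choose `λ2(i) ≥ 0` solving `μ(i)²(1+λ2(i))³ =
1 + 3λ2(i) + 3λ2(i)²`, set `λ1(i) = λ2(i)²/(1+λ2(i))`, `α(i) = μ(i)(1+λ2(i))`,
and give edge `{v_{ij},v_{ik}}` weight `λ1(i)`, edge `{d_i,v_{ij}}` weight
`λ2(i)`, and edge `{v_{ij},v_{ji}}` weight `λ({i,j})α(i)α(j)`.  Then the
pushforward of the matching distribution on `G'` under `x' ↦ x' ∘ φ` equals
the subgraphs-world distribution on `G` with parameters `λ, μ`. -/
theorem stmt9 {V : Type*} [Fintype V] [DecidableEq V]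
    (E : Finset (Sym2 V)) (hE : ∀ e ∈ E, ¬ e.IsDiag)
    (hcubic : ∀ v : V, (E.filter (fun e => v ∈ e)).card = 3)
    (lam : Sym2 V → ℝ) (hlam : ∀ e ∈ E, lam e ∈ Set.Icc (0 : ℝ) 1)
    (mu : V → ℝ) (hmu : ∀ v : V, mu v ∈ Set.Ioc (0 : ℝ) 1)
    -- the gadget parameters
    (l2 l1 al : V → ℝ)
    (hl2 : ∀ i : V, 0 ≤ l2 i)
    (hcubiceq : ∀ i : V,
      (mu i) ^ 2 * (1 + l2 i) ^ 3 = 1 + 3 * l2 i + 3 * (l2 i) ^ 2)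
    (hl1 : ∀ i : V, l1 i = (l2 i) ^ 2 / (1 + l2 i))
    (hal : ∀ i : V, al i = mu i * (1 + l2 i))
    -- the new edge set
    (E' : Finset (Sym2 (V ⊕ V × V)))
    (hE'def : E' = E.image phi9 ∪ Finset.univ.biUnion (gadgetEdges9 E))
    -- the new edge weights
    (lam' : Sym2 (V ⊕ V × V) → ℝ)
    (hlam'1 : ∀ i j : V, s(i, j) ∈ E →
      lam' s(Sum.inr (i, j), Sum.inr (j, i)) = lam s(i, j) * al i * al j)
    (hlam'2 : ∀ i j : V, s(i, j) ∈ E →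
      lam' s(Sum.inl i, Sum.inr (i, j)) = l2 i)
    (hlam'3 : ∀ i j k : V, s(i, j) ∈ E → s(i, k) ∈ E → j ≠ k →
      lam' s(Sum.inr (i, j), Sum.inr (i, k)) = l1 i) :
    ∀ x ∈ E.powerset,
      (∑ x' ∈ E'.powerset.filter
            (fun x' => E.filter (fun e => phi9 e ∈ x') = x),
          wMat9 lam' x') /
        (∑ y' ∈ E'.powerset, wMat9 lam' y')
      = wSubs9 lam mu x / (∑ y ∈ E.powerset, wSubs9 lam mu y) := by
  subst hE'def
  have hfiber : ∀ x ∈ E.powerset,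
      ∑ x' ∈ (E.image phi9 ∪ Finset.univ.biUnion (gadgetEdges9 E)).powerset.filter
          (fun x' => E.filter (fun e => phi9 e ∈ x') = x), wMat9 lam' x' =
        (∏ i, (1 + 3 * l2 i + 3 * l2 i ^ 2)) * wSubs9 lam mu x := by
    intro x hx
    have hxE := Finset.mem_powerset.1 hx
    have hxd : ∀ e ∈ x, ¬ e.IsDiag := fun e he => hE e (hxE he)
    have hdeg : ∀ i, degU9 x i ≤ 3 := fun i =>
      (Finset.card_le_card (Finset.filter_subset_filter _ hxE)).trans (hcubic i).le
    rw [sum_fiber_eq_sum_piFinset hE hxE, Finset.sum_congr rfl fun p hp =>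
        wMat9_union_biUnion hxd lam' fun i => Finset.mem_powerset.1 (Fintype.mem_piFinset.1 hp i),
      ← Finset.mul_sum, ← Finset.prod_univ_sum, prod_lam'_image_phi9 hE hxE hlam'1, mul_assoc,
      ← Finset.prod_mul_distrib, wSubs9, Finset.prod_filter, mul_left_comm,
      ← Finset.prod_mul_distrib]
    congr 1
    refine Finset.prod_congr rfl fun i _ => ?_
    rw [sum_gadgetWeight hxd hxE (hcubic i) (hlam'2 i) (hlam'3 i)]
    exact pow_mul_sum_gadgetTypes (hl2 i) (hcubiceq i) (hl1 i) (hal i) (hdeg i)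
  have hC : ∏ i, (1 + 3 * l2 i + 3 * l2 i ^ 2) ≠ 0 :=
    Finset.prod_ne_zero_iff.2 fun i _ => by
      have := hl2 i
      positivity
  intro x hx
  rw [hfiber x hx, ← Finset.sum_fiberwise_of_maps_to (t := E.powerset)
      (g := fun x' => E.filter (fun e => phi9 e ∈ x'))
      (fun x' _ => Finset.mem_powerset.2 (Finset.filter_subset _ _)),
    Finset.sum_congr rfl hfiber, ← Finset.mul_sum, mul_div_mul_left _ _ hC]
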